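/- (Demonet–Iyama–Reading–Reiten–Thomas) The lattice tors A is weakly atomic: for any torsion classes 𝒰 ⊊ 𝒱 in mod A, there exist torsion classes 𝒳, 𝒴 with 𝒰 ⊆ 𝒳 ⋖ 𝒴 ⊆ 𝒱, i.e. the interval [𝒰, 𝒱] contains a covering pair of tors A. -/

import Mathlib

open CategoryTheory

/-- `𝒯` is a torsion class of finite-dimensional (= finitely generated) left `A`-modules:
a class of finitely generated modules, closed under isomorphism, containing `0`,
closed under quotients and closed under extensions. -/
def IsTorsionClass (A : Type) [Ring A] (𝒯 : Set (ModuleCat.{0} A)) : Prop :=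
  (∀ M ∈ 𝒯, Module.Finite A M) ∧
  (∀ M ∈ 𝒯, ∀ N : ModuleCat.{0} A, Nonempty (M ≃ₗ[A] N) → N ∈ 𝒯) ∧
  (∃ Z ∈ 𝒯, Subsingleton Z) ∧
  (∀ M ∈ 𝒯, ∀ N : ModuleCat.{0} A, ∀ f : M →ₗ[A] N, Function.Surjective f → N ∈ 𝒯) ∧
  (∀ X Y Z : ModuleCat.{0} A, X ∈ 𝒯 → Z ∈ 𝒯 →
    ∀ (f : X →ₗ[A] Y) (g : Y →ₗ[A] Z), Function.Injective f → Function.Surjective g →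
      LinearMap.range f = LinearMap.ker g → Y ∈ 𝒯)

/-- `ℱ` is a torsion-free class: closed under isomorphism, containing `0`,
closed under submodules and closed under extensions. -/
def IsTorsionFreeClass (A : Type) [Ring A] (ℱ : Set (ModuleCat.{0} A)) : Prop :=
  (∀ M ∈ ℱ, Module.Finite A M) ∧
  (∀ M ∈ ℱ, ∀ N : ModuleCat.{0} A, Nonempty (M ≃ₗ[A] N) → N ∈ ℱ) ∧
  (∃ Z ∈ ℱ, Subsingleton Z) ∧
  (∀ M ∈ ℱ, ∀ N : ModuleCat.{0} A, ∀ f : N →ₗ[A] M, Function.Injective f → N ∈ ℱ) ∧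
  (∀ X Y Z : ModuleCat.{0} A, X ∈ ℱ → Z ∈ ℱ →
    ∀ (f : X →ₗ[A] Y) (g : Y →ₗ[A] Z), Function.Injective f → Function.Surjective g →
      LinearMap.range f = LinearMap.ker g → Y ∈ ℱ)

/-- `𝒞⊥ = {Y | Hom(X,Y) = 0 for all X ∈ 𝒞}` (within finite-dimensional modules). -/
def rightPerp (A : Type) [Ring A] (𝒞 : Set (ModuleCat.{0} A)) : Set (ModuleCat.{0} A) :=
  {Y | Module.Finite A Y ∧ ∀ X ∈ 𝒞, ∀ f : X →ₗ[A] Y, f = 0}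

/-- `⊥𝒞 = {X | Hom(X,Y) = 0 for all Y ∈ 𝒞}` (within finite-dimensional modules). -/
def leftPerp (A : Type) [Ring A] (𝒞 : Set (ModuleCat.{0} A)) : Set (ModuleCat.{0} A) :=
  {X | Module.Finite A X ∧ ∀ Y ∈ 𝒞, ∀ f : X →ₗ[A] Y, f = 0}

/-- A brick: a nonzero finite-dimensional module all of whose nonzero endomorphisms
are invertible. -/
def IsBrick (A : Type) [Ring A] (B : ModuleCat.{0} A) : Prop :=
  Module.Finite A B ∧ Nontrivial B ∧ ∀ f : B →ₗ[A] B, f ≠ 0 → Function.Bijective f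

/-- `T(𝒞)`, the smallest torsion class containing `𝒞`. -/
def TgenSet (A : Type) [Ring A] (𝒞 : Set (ModuleCat.{0} A)) : Set (ModuleCat.{0} A) :=
  {X | ∀ 𝒯, IsTorsionClass A 𝒯 → 𝒞 ⊆ 𝒯 → X ∈ 𝒯}

/-- `T(B)`, the smallest torsion class containing the module `B`. -/
def Tgen (A : Type) [Ring A] (B : ModuleCat.{0} A) : Set (ModuleCat.{0} A) :=
  TgenSet A {B}

/-- `F(B)`, the smallest torsion-free class containing the module `B`. -/
def Fgen (A : Type) [Ring A] (B : ModuleCat.{0} A) : Set (ModuleCat.{0} A) :=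
  {X | ∀ ℱ, IsTorsionFreeClass A ℱ → B ∈ ℱ → X ∈ ℱ}

/-- The join of a family of torsion classes in `tors A`: the intersection of all torsion
classes containing every member of the family. -/
def torsJoin (A : Type) [Ring A] (S : Set (Set (ModuleCat.{0} A))) : Set (ModuleCat.{0} A) :=
  {M | ∀ 𝒲, IsTorsionClass A 𝒲 → (∀ 𝒯 ∈ S, 𝒯 ⊆ 𝒲) → M ∈ 𝒲}

/-!
Intersections of torsion classes and unions of chains of torsion classes are torsion classes, and
only these two facts are needed. Given `M ∈ 𝒱 \ 𝒰`, Zorn's lemma yields a torsion class `𝒳` that is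
maximal among those between `𝒰` and `𝒱` avoiding `M`. A torsion class strictly above `𝒳` and inside
`𝒱` must contain `M`, hence also the torsion class `𝒴` generated by `𝒳` and `M`; so `𝒳 ⋖ 𝒴`.
-/

section SetFamily

variable {α : Type*} {C : Set (Set α)}

theorem exists_superset_maximal_notMem
    (hUnion : ∀ c ⊆ C, c.Nonempty → IsChain (· ⊆ ·) c → ⋃₀ c ∈ C)
    {u : Set α} (hu : u ∈ C) {m : α} (hmu : m ∉ u) :
    ∃ x, u ⊆ x ∧ Maximal (fun s ↦ s ∈ C ∧ m ∉ s) x := by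
  refine zorn_subset_nonempty {s | s ∈ C ∧ m ∉ s} (fun c hc hchain hne ↦ ?_) u ⟨hu, hmu⟩
  have hm : m ∉ ⋃₀ c := fun ⟨s, hs, hms⟩ ↦ (hc hs).2 hms
  exact ⟨⋃₀ c, ⟨hUnion c (fun s hs ↦ (hc hs).1) hne hchain, hm⟩,
    fun s hs ↦ Set.subset_sUnion_of_mem hs⟩

theorem exists_le_covBy_le
    (hInter : ∀ S ⊆ C, S.Nonempty → ⋂₀ S ∈ C)
    (hUnion : ∀ c ⊆ C, c.Nonempty → IsChain (· ⊆ ·) c → ⋃₀ c ∈ C)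
    {u v : C} (huv : u < v) :
    ∃ x y : C, u ≤ x ∧ x ⋖ y ∧ y ≤ v := by
  obtain ⟨m, hmv, hmu⟩ := Set.exists_of_ssubset huv
  have hUnion_inside : ∀ c ⊆ {s ∈ C | s ⊆ v}, c.Nonempty → IsChain (· ⊆ ·) c →
      ⋃₀ c ∈ {s ∈ C | s ⊆ v} := fun c hc hne hchain ↦
    ⟨hUnion c (fun s hs ↦ (hc hs).1) hne hchain, Set.sUnion_subset fun s hs ↦ (hc hs).2⟩
  obtain ⟨x, hux, hx⟩ := exists_superset_maximal_notMem hUnion_inside ⟨u.2, huv.le⟩ hmu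
  obtain ⟨⟨hxC, hxv⟩, hmx⟩ := hx.prop
  set y : Set α := ⋂₀ {s ∈ C | insert m x ⊆ s}
  have y_subset {s : Set α} (hs : s ∈ C) (hms : m ∈ s) (hxs : x ⊆ s) : y ⊆ s :=
    Set.sInter_subset_of_mem ⟨hs, Set.insert_subset hms hxs⟩
  have hyC : y ∈ C := hInter _ (fun s hs ↦ hs.1) ⟨v, v.2, Set.insert_subset hmv hxv⟩
  have hmxy : insert m x ⊆ y := Set.subset_sInter fun s hs ↦ hs.2
  have hyv : y ⊆ v := y_subset v.2 hmv hxv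
  have hmy : m ∈ y := hmxy (Set.mem_insert m x)
  have hxy : x ⊂ y := ⟨(Set.subset_insert m x).trans hmxy, fun hyx ↦ hmx (hyx hmy)⟩
  refine ⟨⟨x, hxC⟩, ⟨y, hyC⟩, hux, ⟨hxy, fun z hxz hzy ↦ ?_⟩, hyv⟩
  have hmz : m ∈ (z : Set α) := by
    by_contra hmz
    exact hxz.not_ge (hx.le_of_ge ⟨⟨z.2, hzy.le.trans hyv⟩, hmz⟩ hxz.le)
  exact hzy.not_ge (y_subset z.2 hmz hxz.le)

end SetFamily

namespace IsTorsionClass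

variable {A : Type} [Ring A]

theorem mem_of_subsingleton {𝒯 : Set (ModuleCat.{0} A)} (h𝒯 : IsTorsionClass A 𝒯)
    (N : ModuleCat.{0} A) [Subsingleton N] : N ∈ 𝒯 := by
  obtain ⟨-, -, ⟨Z, hZ, -⟩, quot, -⟩ := h𝒯
  exact quot Z hZ N 0 fun n ↦ ⟨0, Subsingleton.elim _ n⟩

variable {S : Set (Set (ModuleCat.{0} A))}

theorem sInter (hS : ∀ 𝒯 ∈ S, IsTorsionClass A 𝒯) (hne : S.Nonempty) :
    IsTorsionClass A (⋂₀ S) := by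
  refine ⟨fun M hM ↦ ?finite, fun M hM N e 𝒯 h𝒯 ↦ ?iso, ?zero,
    fun M hM N f hf 𝒯 h𝒯 ↦ ?quotient, fun X Y Z hX hZ f g hf hg hfg 𝒯 h𝒯 ↦ ?extension⟩
  case finite =>
    obtain ⟨𝒯, h𝒯⟩ := hne
    exact (hS 𝒯 h𝒯).1 M (hM 𝒯 h𝒯)
  case iso => exact (hS 𝒯 h𝒯).2.1 M (hM 𝒯 h𝒯) N e
  case zero =>
    exact ⟨ModuleCat.of A PUnit, fun 𝒯 h𝒯 ↦ (hS 𝒯 h𝒯).mem_of_subsingleton _,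
      inferInstanceAs (Subsingleton PUnit)⟩
  case quotient => exact (hS 𝒯 h𝒯).2.2.2.1 M (hM 𝒯 h𝒯) N f hf
  case extension => exact (hS 𝒯 h𝒯).2.2.2.2 X Y Z (hX 𝒯 h𝒯) (hZ 𝒯 h𝒯) f g hf hg hfg

theorem sUnion_of_directedOn (hS : ∀ 𝒯 ∈ S, IsTorsionClass A 𝒯) (hne : S.Nonempty)
    (hdir : DirectedOn (· ⊆ ·) S) : IsTorsionClass A (⋃₀ S) := by
  refine ⟨fun M ⟨𝒯, h𝒯, hM⟩ ↦ ?finite, fun M ⟨𝒯, h𝒯, hM⟩ N e ↦ ?iso, ?zero,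
    fun M ⟨𝒯, h𝒯, hM⟩ N f hf ↦ ?quotient,
    fun X Y Z ⟨𝒯, h𝒯, hX⟩ ⟨𝒯', h𝒯', hZ⟩ f g hf hg hfg ↦ ?extension⟩
  case finite => exact (hS 𝒯 h𝒯).1 M hM
  case iso => exact ⟨𝒯, h𝒯, (hS 𝒯 h𝒯).2.1 M hM N e⟩
  case zero =>
    obtain ⟨𝒯, h𝒯⟩ := hne
    obtain ⟨Z, hZ, hZ0⟩ := (hS 𝒯 h𝒯).2.2.1
    exact ⟨Z, ⟨𝒯, h𝒯, hZ⟩, hZ0⟩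
  case quotient => exact ⟨𝒯, h𝒯, (hS 𝒯 h𝒯).2.2.2.1 M hM N f hf⟩
  case extension =>
    obtain ⟨𝒲, h𝒲, hle, hle'⟩ := hdir 𝒯 h𝒯 𝒯' h𝒯'
    exact ⟨𝒲, h𝒲, (hS 𝒲 h𝒲).2.2.2.2 X Y Z (hle hX) (hle' hZ) f g hf hg hfg⟩

end IsTorsionClass

theorem tors_weakly_atomic_general (A : Type) [Ring A] (𝒰 𝒱 : Set (ModuleCat.{0} A))
    (h𝒰 : IsTorsionClass A 𝒰) (h𝒱 : IsTorsionClass A 𝒱) (h : 𝒰 ⊂ 𝒱) :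
    ∃ 𝒳 𝒴, IsTorsionClass A 𝒳 ∧ IsTorsionClass A 𝒴 ∧
      𝒰 ⊆ 𝒳 ∧ 𝒳 ⊂ 𝒴 ∧ 𝒴 ⊆ 𝒱 ∧
      ∀ 𝒵, IsTorsionClass A 𝒵 → 𝒳 ⊂ 𝒵 → 𝒵 ⊂ 𝒴 → False := by
  obtain ⟨⟨𝒳, h𝒳⟩, ⟨𝒴, h𝒴⟩, h𝒰𝒳, hcov, h𝒴𝒱⟩ :=
    exists_le_covBy_le (C := {𝒯 | IsTorsionClass A 𝒯})
      (fun _ hS hne ↦ .sInter hS hne)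
      (fun _ hc hne hchain ↦ .sUnion_of_directedOn hc hne hchain.directedOn)
      (u := ⟨𝒰, h𝒰⟩) (v := ⟨𝒱, h𝒱⟩) h
  exact ⟨𝒳, 𝒴, h𝒳, h𝒴, h𝒰𝒳, hcov.lt, h𝒴𝒱, fun 𝒵 h𝒵 h𝒳𝒵 h𝒵𝒴 ↦ hcov.2 (c := ⟨𝒵, h𝒵⟩) h𝒳𝒵 h𝒵𝒴⟩

theorem tors_weakly_atomic
    (k A : Type) [Field k] [Ring A] [Algebra k A] [FiniteDimensional k A]
    (𝒰 𝒱 : Set (ModuleCat.{0} A))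
    (h𝒰 : IsTorsionClass A 𝒰) (h𝒱 : IsTorsionClass A 𝒱) (h : 𝒰 ⊂ 𝒱) :
    ∃ 𝒳 𝒴, IsTorsionClass A 𝒳 ∧ IsTorsionClass A 𝒴 ∧
      𝒰 ⊆ 𝒳 ∧ 𝒳 ⊂ 𝒴 ∧ 𝒴 ⊆ 𝒱 ∧
      ∀ 𝒵, IsTorsionClass A 𝒵 → 𝒳 ⊂ 𝒵 → 𝒵 ⊂ 𝒴 → False :=
  tors_weakly_atomic_general A 𝒰 𝒱 h𝒰 h𝒱 h
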